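/- For every natural number n there exists a metrizable continuum that is hereditarily indecomposable and has covering dimension exactly n, i.e., it possesses an essential family of n pairs of disjoint closed sets but no essential family of n+1 pairs. -/

import Mathlib

open Set

/-- A space is *hereditarily indecomposable* if whenever two subcontinua
(nonempty compact connected subsets) intersect, one is contained in the other. -/
def HereditarilyIndecomposable (X : Type*) [TopologicalSpace X] : Prop :=
  ∀ C D : Set X, IsCompact C → IsConnected C → IsCompact D → IsConnected D →
    (C ∩ D).Nonempty → C ⊆ D ∨ D ⊆ C

/-- `L` is a partition between `A` and `B`: a closed set whose complement is the
union of two disjoint open sets containing `A` and `B` respectively. -/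
def IsPartitionBetween {X : Type*} [TopologicalSpace X] (L A B : Set X) : Prop :=
  IsClosed L ∧ ∃ U V : Set X, IsOpen U ∧ IsOpen V ∧ Disjoint U V ∧
    A ⊆ U ∧ B ⊆ V ∧ Lᶜ = U ∪ V

/-- A family of pairs of disjoint closed sets is *essential* if every choice of
partitions between the pairs has nonempty intersection. -/
def IsEssentialFamily {X : Type*} [TopologicalSpace X] {I : Type*} (A B : I → Set X) : Prop :=
  (∀ i, IsClosed (A i)) ∧ (∀ i, IsClosed (B i)) ∧ (∀ i, Disjoint (A i) (B i)) ∧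
    ∀ L : I → Set X, (∀ i, IsPartitionBetween (L i) (A i) (B i)) → (⋂ i, L i).Nonempty

/-!
In the cube `[0, 1]ⁿ⁺¹` the `n + 1` pairs of opposite faces form an essential family; this is the
Poincaré–Miranda theorem, i.e. Brouwer's fixed point theorem, which is obtained from the invariance
of `∫ p(‖x + t • g x‖²) det(1 + t • Dg x)` under the parameter `t`. If `L` separates the first pair
of faces, then the remaining `n` pairs are essential on `L`.

Starting from a slab between the faces of the first pair, one passes to thinner and thinner slabs
`{|f k| ≤ 1}` which still separate these faces, which are crooked with respect to the `k`-th member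
of a dense sequence of test functions, and whose measures tend to zero. Their intersection is
hereditarily indecomposable because of the crookedness, and by compactness the `n` remaining pairs
are essential on it. A minimal closed subset with this property is a continuum. Being a null set in
`ℝⁿ⁺¹` it carries no essential family of `n + 1` pairs, as continuously differentiable maps
preserve null sets.
-/

section FixedPoints

open MeasureTheory Polynomial Function Filter Topology Module

theorem exists_polynomial_eval_eq_integral {α : Type*} [MeasurableSpace α] {μ : Measure α}
    {P : α → ℝ[X]} {m : ℕ} (hdeg : ∀ x, (P x).natDegree ≤ m)
    (hint : ∀ t, Integrable (fun x ↦ (P x).eval t) μ) :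
    ∃ Q : ℝ[X], ∀ t, Q.eval t = ∫ x, (P x).eval t ∂μ := by
  let node : ℕ → ℝ := fun i ↦ i
  let b := Lagrange.basis (Finset.range (m + 1)) node
  have hP (x) : P x = ∑ i ∈ Finset.range (m + 1), C ((P x).eval (node i)) * b i := by
    have hlt : (P x).degree < (Finset.range (m + 1)).card := by
      rw [Finset.card_range]
      exact degree_le_natDegree.trans_lt (mod_cast Nat.lt_succ_of_le (hdeg x))
    conv_lhs => rw [Lagrange.eq_interpolate Nat.cast_injective.injOn hlt,
      Lagrange.interpolate_apply]
  refine ⟨∑ i ∈ Finset.range (m + 1), C (∫ x, (P x).eval (node i) ∂μ) * b i, fun t ↦ ?_⟩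
  calc _ = ∑ i ∈ Finset.range (m + 1), ∫ x, (P x).eval (node i) * (b i).eval t ∂μ := by
        simp only [eval_finsetSum, eval_mul, eval_C, integral_mul_const]
    _ = ∫ x, ∑ i ∈ Finset.range (m + 1), (P x).eval (node i) * (b i).eval t ∂μ :=
        (integral_finsetSum _ fun i _ ↦ (hint _).mul_const _).symm
    _ = ∫ x, (P x).eval t ∂μ := integral_congr_ae <| .of_forall fun x ↦ by
        dsimp only
        conv_rhs => rw [hP x]
        simp only [eval_finsetSum, eval_mul, eval_C]

theorem integral_eval_eq_of_forall_mem_Ioo {α : Type*} [MeasurableSpace α] {μ : Measure α}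
    {P : α → ℝ[X]} {m : ℕ} (hdeg : ∀ x, (P x).natDegree ≤ m)
    (hint : ∀ t, Integrable (fun x ↦ (P x).eval t) μ) {a b c : ℝ} (hab : a < b)
    (hc : ∀ t ∈ Ioo a b, ∫ x, (P x).eval t ∂μ = c) (t : ℝ) :
    ∫ x, (P x).eval t ∂μ = c := by
  obtain ⟨Q, hQ⟩ := exists_polynomial_eval_eq_integral hdeg hint
  have hQc : Q = C c := eq_of_infinite_eval_eq _ _ <| (Ioo_infinite hab).mono fun t ht ↦ by
    simpa only [mem_ofPred_eq, eval_C, hQ] using hc t ht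
  rw [← hQ, hQc, eval_C]

theorem exists_polynomial_eval_eq_det_one_add_smul {R M : Type*} [CommRing R] [Nontrivial R]
    [AddCommGroup M] [Module R M] [Module.Free R M] [Module.Finite R M] (A : M →ₗ[R] M) :
    ∃ Q : R[X], Q.natDegree ≤ finrank R M ∧ ∀ t : R, Q.eval t = LinearMap.det (1 + t • A) := by
  let b := finBasis R M
  let N := LinearMap.toMatrix b b A
  have hdeg := natDegree_det_X_add_C_le N 1
  rw [Fintype.card_fin] at hdeg
  refine ⟨_, hdeg, fun t ↦ ?_⟩
  rw [← LinearMap.det_toMatrix b, ← coe_evalRingHom, RingHom.map_det]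
  congr 1
  ext i j
  simp only [RingHom.mapMatrix_apply, Matrix.map_apply, Matrix.add_apply, Matrix.smul_apply,
    map_add, map_smul, LinearMap.toMatrix_one, coe_evalRingHom, smul_eq_mul, eval_mul,
    eval_X, eval_C, N]
  rw [add_comm]

theorem exists_setIntegral_pow_mul_lt_setIntegral_pow {α : Type*} [MeasurableSpace α]
    {μ : Measure α} {a b d : α → ℝ} {s t : Set α} {q D : ℝ} (hs : MeasurableSet s) (hμs : μ s ≠ ⊤)
    (ht : MeasurableSet t) (hts : t ⊆ s) (hμt : μ t ≠ 0) (hb : ∀ k : ℕ, IntegrableOn (b ^ k) s μ)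
    (hq : q < 1) (ha : ∀ x ∈ s, |a x| ≤ q) (hd : ∀ x ∈ s, |d x| ≤ D) (hb_nonneg : ∀ x ∈ s, 0 ≤ b x)
    (hb_one : ∀ x ∈ t, 1 ≤ b x) : ∃ k : ℕ, ∫ x in s, a x ^ k * d x ∂μ < ∫ x in s, b x ^ k ∂μ := by
  by_contra! hle
  have hlower (k : ℕ) : μ.real t ≤ ∫ x in s, b x ^ k ∂μ := calc
    μ.real t ≤ ∫ x in t, b x ^ k ∂μ := by
      simpa only [one_mul] using! setIntegral_ge_of_const_le_real ht
        (measure_ne_top_of_subset hts hμs) (fun x hx ↦ one_le_pow₀ (hb_one x hx))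
        ((hb k).mono_set hts)
    _ ≤ ∫ x in s, b x ^ k ∂μ := setIntegral_mono_set (hb k)
      (ae_restrict_of_forall_mem hs fun x hx ↦ pow_nonneg (hb_nonneg x hx) k) hts.eventuallyLE
  have hupper (k : ℕ) : ∫ x in s, a x ^ k * d x ∂μ ≤ q ^ k * D * μ.real s := by
    refine (Real.le_norm_self _).trans <|
      norm_setIntegral_le_of_norm_le_const hμs.lt_top fun x hx ↦ ?_
    rw [norm_mul, norm_pow]
    exact mul_le_mul (pow_le_pow_left₀ (abs_nonneg _) (ha x hx) k) (hd x hx) (abs_nonneg _)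
      (pow_nonneg ((abs_nonneg _).trans (ha x hx)) k)
  obtain ⟨x, hx⟩ := nonempty_of_measure_ne_zero hμt
  have hlim : Tendsto (fun k ↦ q ^ k * D * μ.real s) atTop (𝓝 0) := by
    simpa only [zero_mul] using ((tendsto_pow_atTop_nhds_zero_of_lt_one
      ((abs_nonneg _).trans (ha x (hts hx))) hq).mul_const D).mul_const (μ.real s)
  exact (ge_of_tendsto' hlim fun k ↦ (hlower k).trans ((hle k).trans (hupper k))).not_gt
    (ENNReal.toReal_pos hμt (measure_ne_top_of_subset hts hμs))

section NormedSpace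

variable {V : Type*} [NormedAddCommGroup V] [NormedSpace ℝ V] [FiniteDimensional ℝ V]

theorem det_one_add_ne_zero {A : V →L[ℝ] V} (hA : ‖A‖ < 1) : (1 + A).det ≠ 0 := by
  have hunit : IsUnit (1 + A) := by
    simpa only [sub_neg_eq_add] using isUnit_one_sub_of_norm_lt_one (x := -A) (by rwa [norm_neg])
  exact (LinearMap.isUnit_det _
    (hunit.map (ContinuousLinearMap.toLinearMapRingHom (R₁ := ℝ) (M₁ := V)))).ne_zero

theorem det_one_add_pos {A : V →L[ℝ] V} (hA : ‖A‖ < 1) : 0 < (1 + A).det := by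
  have hne : ∀ t ∈ Icc (0 : ℝ) 1, (1 + t • A).det ≠ 0 := fun t ht ↦ det_one_add_ne_zero <| by
    rw [norm_smul, Real.norm_of_nonneg ht.1]
    exact (mul_le_of_le_one_left (norm_nonneg A) ht.2).trans_lt hA
  have hcont : Continuous fun t : ℝ ↦ (1 + t • A).det :=
    ContinuousLinearMap.continuous_det.comp (by fun_prop)
  by_contra! hneg
  have hzero : (0 : ℝ) ∈ Icc (1 + (1 : ℝ) • A).det (1 + (0 : ℝ) • A).det := by
    have hone : (1 : V →L[ℝ] V).det = 1 := LinearMap.det_id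
    rw [one_smul, zero_smul, add_zero, hone]
    exact ⟨hneg, zero_le_one⟩
  obtain ⟨t, ht, ht0⟩ := intermediate_value_Icc' zero_le_one hcont.continuousOn hzero
  exact hne t ht ht0

theorem bijective_add_of_lipschitzWith {E : Type*} [NormedAddCommGroup E] [CompleteSpace E]
    {g : E → E} {K : NNReal} (hK : K < 1) (hg : LipschitzWith K g) :
    Bijective fun x ↦ x + g x := by
  refine ⟨(AntilipschitzWith.id.add_lipschitzWith hg (by rwa [inv_one])).injective, fun y ↦ ?_⟩
  have hcontr : ContractingWith K fun x ↦ y - g x :=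
    ⟨hK, by simpa only [zero_add] using (LipschitzWith.const y).sub hg⟩
  exact ⟨_, eq_sub_iff_add_eq.mp hcontr.fixedPoint_isFixedPt.symm⟩

theorem image_add_eq_of_support_subset {E : Type*} [AddGroup E] {g : E → E} {s : Set E}
    (hg : support g ⊆ s) (hbij : Bijective fun x ↦ x + g x) : (fun x ↦ x + g x) '' s = s := by
  have hfix : ∀ x ∉ s, x + g x = x := fun x hx ↦ by
    rw [notMem_support.mp fun h ↦ hx (hg h), add_zero]
  rw [← compl_inj_iff, ← image_compl_eq hbij]
  exact (image_congr hfix).trans (image_id' _)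

variable [MeasurableSpace V] [BorelSpace V]

theorem setIntegral_comp_add_mul_det {μ : Measure V} [μ.IsAddHaarMeasure] {g : V → V} {s : Set V}
    {K : NNReal} (hg : Differentiable ℝ g) (hK : K < 1) (hlip : LipschitzWith K g)
    (hs : MeasurableSet s) (hgs : support g ⊆ s) (w : V → ℝ) :
    ∫ x in s, w (x + g x) * (1 + fderiv ℝ g x).det ∂μ = ∫ x in s, w x ∂μ := by
  have hbij := bijective_add_of_lipschitzWith hK hlip
  have hderiv : ∀ x ∈ s, HasFDerivWithinAt (fun x ↦ x + g x) (1 + fderiv ℝ g x) s x :=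
    fun x _ ↦ ((hasFDerivAt_id x).add (hg x).hasFDerivAt).hasFDerivWithinAt
  calc _ = ∫ x in s, |(1 + fderiv ℝ g x).det| • w (x + g x) ∂μ := by
        refine integral_congr_ae <| .of_forall fun x ↦ ?_
        dsimp only
        rw [abs_of_pos (det_one_add_pos ((norm_fderiv_le_of_lipschitz ℝ hlip).trans_lt hK)),
          smul_eq_mul, mul_comm]
    _ = ∫ x in (fun x ↦ x + g x) '' s, w x ∂μ :=
        (integral_image_eq_integral_abs_det_fderiv_smul μ hs hderiv hbij.injective.injOn w).symm
    _ = ∫ x in s, w x ∂μ := by rw [image_add_eq_of_support_subset hgs hbij]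

end NormedSpace

section InnerProductSpace

variable {V : Type*} [NormedAddCommGroup V] [InnerProductSpace ℝ V]

theorem exists_polynomial_eval_eq_comp_norm_sq (p : ℝ[X]) (x v : V) :
    ∃ Q : ℝ[X], Q.natDegree ≤ p.natDegree * 2 ∧ ∀ t : ℝ, Q.eval t = p.eval (‖x + t • v‖ ^ 2) := by
  refine ⟨p.comp (C (‖v‖ ^ 2) * X ^ 2 + C (2 * inner ℝ x v) * X + C (‖x‖ ^ 2)),
    natDegree_comp_le.trans (Nat.mul_le_mul_left _ natDegree_quadratic_le), fun t ↦ ?_⟩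
  rw [eval_comp, norm_add_sq_real, inner_smul_right, norm_smul, Real.norm_eq_abs, mul_pow, sq_abs]
  simp only [eval_add, eval_mul, eval_C, eval_pow, eval_X]
  ring_nf

variable [FiniteDimensional ℝ V]

-- For small `t` the map `x ↦ x + t • g x` is a diffeomorphism, so the formula is a change of
-- variables; as the left-hand side is a polynomial in `t`, it persists for all `t`.
theorem setIntegral_eval_norm_sq_mul_det [MeasurableSpace V] [BorelSpace V] {μ : Measure V}
    [μ.IsAddHaarMeasure] {g : V → V} {s : Set V} (hg : ContDiff ℝ 1 g) (hs : IsCompact s)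
    (hgs : support g ⊆ s) (p : ℝ[X]) (t : ℝ) :
    ∫ x in s, p.eval (‖x + t • g x‖ ^ 2) * (1 + t • fderiv ℝ g x).det ∂μ
      = ∫ x in s, p.eval (‖x‖ ^ 2) ∂μ := by
  choose P hPdeg hP using fun x ↦ exists_polynomial_eval_eq_comp_norm_sq p x (g x)
  choose Q hQdeg hQ using fun x ↦
    exists_polynomial_eval_eq_det_one_add_smul (fderiv ℝ g x : V →ₗ[ℝ] V)
  have heval (t x) : (P x * Q x).eval t
      = p.eval (‖x + t • g x‖ ^ 2) * (1 + t • fderiv ℝ g x).det := by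
    rw [eval_mul, hP, hQ]; rfl
  have hint (t : ℝ) : IntegrableOn (fun x ↦ (P x * Q x).eval t) s μ := by
    simp only [heval]
    have := hg.continuous_fderiv one_ne_zero
    have hdet : Continuous fun x ↦ (1 + t • fderiv ℝ g x).det :=
      ContinuousLinearMap.continuous_det.comp (by fun_prop)
    have := hg.continuous
    exact Continuous.continuousOn (by fun_prop) |>.integrableOn_compact hs
  obtain ⟨L, hL⟩ := hg.lipschitzWith_of_hasCompactSupport
    (.intro hs fun x hx ↦ notMem_support.mp fun h ↦ hx (hgs h)) one_ne_zero
  have hsmall : ∀ t ∈ Ioo (0 : ℝ) (1 / (L + 1)),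
      ∫ x in s, (P x * Q x).eval t ∂μ = ∫ x in s, p.eval (‖x‖ ^ 2) ∂μ := fun t ht ↦ by
    have hK : ‖t‖₊ * L < 1 := by
      rw [← NNReal.coe_lt_coe]
      push_cast
      rw [Real.norm_of_nonneg ht.1.le]
      nlinarith [(lt_div_iff₀ (by positivity)).mp ht.2, ht.1]
    have hderiv (x) : fderiv ℝ (t • g) x = t • fderiv ℝ g x :=
      fderiv_const_smul (hg.differentiable one_ne_zero x) t
    simpa only [heval, hderiv, Pi.smul_apply] using
      setIntegral_comp_add_mul_det ((hg.differentiable one_ne_zero).const_smul t) hK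
        ((lipschitzWith_smul t).comp hL) hs.measurableSet
        ((support_const_smul_subset t g).trans hgs) fun y ↦ p.eval (‖y‖ ^ 2)
  simpa only [heval] using integral_eval_eq_of_forall_mem_Ioo
    (fun x ↦ natDegree_mul_le.trans (add_le_add (hPdeg x) (hQdeg x))) hint (by positivity) hsmall t

theorem exists_polynomial_peak {ε M : ℝ} (hε : 0 < ε) (hεM : ε ≤ M) :
    ∃ p : ℝ[X], ∃ q < 1, (∀ u ∈ Icc ε M, |p.eval u| ≤ q) ∧
      (∀ u ≤ M, 0 ≤ p.eval u) ∧ ∀ u ≤ ε / 2, 1 ≤ p.eval u := by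
  have hM : 0 < M := hε.trans_le hεM
  have hnonneg : ∀ u ≤ M, 0 ≤ M⁻¹ * (M + ε / 2 - u) := fun u hu ↦
    mul_nonneg (by positivity) (by linarith)
  refine ⟨C (M⁻¹) * (C (M + ε / 2) - X), M⁻¹ * (M - ε / 2), ?_, fun u hu ↦ ?_, fun u hu ↦ ?_,
    fun u hu ↦ ?_⟩
  · rw [inv_mul_lt_one₀ hM]; linarith
  all_goals simp only [eval_mul, eval_sub, eval_C, eval_X]
  · rw [abs_of_nonneg (hnonneg u hu.2)]
    exact mul_le_mul_of_nonneg_left (by linarith [hu.1]) (by positivity)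
  · exact hnonneg u hu
  · rw [one_le_inv_mul₀ hM]; linarith

-- If `x + g x` had no zero, high powers of a polynomial peaking at `0` would make the left-hand
-- side of `setIntegral_eval_norm_sq_mul_det` at `t = 1` smaller than the right-hand side.
theorem exists_add_eq_zero_of_contDiff {g : V → V} (hg : ContDiff ℝ 1 g)
    (hsupp : HasCompactSupport g) : ∃ x, x + g x = 0 := by
  borelize V
  by_contra! hne
  obtain ⟨R, hR, hgR⟩ := hsupp.isBounded.subset_closedBall_lt 0 0
  let s := Metric.closedBall (0 : V) R
  have hs : IsCompact s := isCompact_closedBall 0 R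
  have hF : Continuous fun x ↦ ‖x + g x‖ ^ 2 := by have := hg.continuous; fun_prop
  have hdet : Continuous fun x ↦ (1 + fderiv ℝ g x).det := by
    have := hg.continuous_fderiv one_ne_zero
    exact ContinuousLinearMap.continuous_det.comp (by fun_prop)
  obtain ⟨x₀, hx₀s, hx₀⟩ := hs.exists_isMinOn ⟨0, Metric.mem_closedBall_self hR.le⟩ hF.continuousOn
  obtain ⟨M, hM⟩ := hs.bddAbove_image hF.continuousOn
  rw [mem_upperBounds, forall_mem_image] at hM
  obtain ⟨D, hD⟩ := hs.exists_bound_of_continuousOn hdet.continuousOn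
  have hε : 0 < ‖x₀ + g x₀‖ ^ 2 := pow_pos (norm_pos_iff.mpr (hne x₀)) 2
  obtain ⟨p, q, hq, hpq, hp_nonneg, hp_one⟩ := exists_polynomial_peak hε
    ((hM hx₀s).trans (le_max_left M (R ^ 2)))
  let t := {x : V | ‖x‖ ^ 2 < ‖x₀ + g x₀‖ ^ 2 / 2} ∩ s
  have ht_open : IsOpen {x : V | ‖x‖ ^ 2 < ‖x₀ + g x₀‖ ^ 2 / 2} :=
    isOpen_lt (by fun_prop) continuous_const
  have ht : t ∈ 𝓝 0 := inter_mem
    (ht_open.mem_nhds (by rw [mem_ofPred_eq, norm_zero, zero_pow two_ne_zero]; positivity))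
    (Metric.closedBall_mem_nhds 0 hR)
  obtain ⟨k, hk⟩ := exists_setIntegral_pow_mul_lt_setIntegral_pow (μ := volume) (t := t)
    (a := fun x ↦ p.eval (‖x + g x‖ ^ 2)) (b := fun x ↦ p.eval (‖x‖ ^ 2))
    hs.measurableSet hs.measure_ne_top (ht_open.measurableSet.inter hs.measurableSet)
    inter_subset_right (Measure.measure_pos_of_mem_nhds volume ht).ne'
    (fun k ↦ Continuous.continuousOn (by fun_prop) |>.integrableOn_compact hs) hq
    (fun x hx ↦ hpq _ ⟨hx₀ hx, le_max_of_le_left (hM hx)⟩) hD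
    (fun x hx ↦ hp_nonneg _ <| le_max_of_le_right <|
      pow_le_pow_left₀ (norm_nonneg x) (mem_closedBall_zero_iff.mp hx) 2)
    fun x hx ↦ hp_one _ hx.1.le
  refine hk.ne ?_
  simpa only [one_smul, eval_pow] using
    setIntegral_eval_norm_sq_mul_det hg hs ((subset_tsupport g).trans hgR) (p ^ k) 1

end InnerProductSpace

theorem exists_add_eq_zero_of_hasCompactSupport {E : Type*} [NormedAddCommGroup E]
    [NormedSpace ℝ E] [FiniteDimensional ℝ E] {g : E → E} (hg : Continuous g)
    (hsupp : HasCompactSupport g) : ∃ x, x + g x = 0 := by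
  let e := toEuclidean (E := E)
  let h := e ∘ g ∘ e.symm
  by_contra! hne
  have hh : Continuous h := by fun_prop
  have hh_supp : HasCompactSupport h :=
    (hsupp.comp_homeomorph e.symm.toHomeomorph).comp_left (map_zero e)
  have hh_ne (y) : y + h y ≠ 0 := fun hy ↦ hne (e.symm y) <| e.injective <| by
    rwa [map_add, e.apply_symm_apply, map_zero]
  obtain ⟨h', hh', hdist, hsub⟩ := hh.exists_contDiff_approx 1 (ε := fun y ↦ ‖y + h y‖)
    (by fun_prop) fun y ↦ norm_pos_iff.mpr (hh_ne y)
  obtain ⟨y, hy⟩ := exists_add_eq_zero_of_contDiff hh' (hh_supp.mono hsub)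
  refine (hdist y).ne ?_
  rw [dist_comm, dist_eq_norm, eq_neg_of_add_eq_zero_right hy, sub_neg_eq_add, add_comm]

theorem exists_fixedPoint_of_isBounded_range {E : Type*} [NormedAddCommGroup E] [NormedSpace ℝ E]
    [FiniteDimensional ℝ E] {f : E → E} (hf : Continuous f) (hbdd : Bornology.IsBounded (range f)) :
    ∃ x, f x = x := by
  obtain ⟨R, -, hfR⟩ := hbdd.exists_pos_norm_lt
  obtain ⟨χ, hχ_one, -, hχ_supp, hχ_mem⟩ := exists_continuous_one_zero_of_isCompact
    (isCompact_closedBall (0 : E) R) isClosed_empty (disjoint_empty _)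
  obtain ⟨x, hx⟩ := exists_add_eq_zero_of_hasCompactSupport (g := fun x ↦ χ x • -f x) (by fun_prop)
    (hχ_supp.smul_right (f' := fun x ↦ -f x))
  rw [smul_neg, ← sub_eq_add_neg, sub_eq_zero] at hx
  have hxR : x ∈ Metric.closedBall 0 R := by
    rw [mem_closedBall_zero_iff, hx, norm_smul, Real.norm_of_nonneg (hχ_mem x).1]
    exact (mul_le_of_le_one_left (norm_nonneg _) (hχ_mem x).2).trans (hfR _ ⟨x, rfl⟩).le
  rw [hχ_one hxR, Pi.one_apply, one_smul] at hx
  exact ⟨x, hx.symm⟩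

/-- **Poincaré–Miranda theorem.** -/
theorem exists_eq_zero_of_faces {ι : Type*} [Finite ι] (f : C(Icc (0 : ι → ℝ) 1, ι → ℝ))
    (h0 : ∀ x i, x.1 i = 0 → f x i ≤ 0) (h1 : ∀ x i, x.1 i = 1 → 0 ≤ f x i) : ∃ x, f x = 0 := by
  have := Fintype.ofFinite ι
  let clip (x : ι → ℝ) : Icc (0 : ι → ℝ) 1 :=
    ⟨0 ⊔ 1 ⊓ x, le_sup_left, sup_le zero_le_one inf_le_left⟩
  have hclip : Continuous clip :=
    (continuous_pi fun i ↦ continuous_const.max (continuous_const.min (continuous_apply i))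
      : Continuous fun x : ι → ℝ ↦ 0 ⊔ 1 ⊓ x).subtype_mk _
  have hcompact : IsCompact (range fun x : Icc (0 : ι → ℝ) 1 ↦ x.1 - f x) :=
    isCompact_range (by fun_prop)
  obtain ⟨x, hx⟩ := exists_fixedPoint_of_isBounded_range (f := fun x ↦ (clip x).1 - f (clip x))
    (by fun_prop) (hcompact.isBounded.subset <| range_subset_iff.mpr fun x ↦ ⟨clip x, rfl⟩)
  refine ⟨clip x, funext fun i ↦ ?_⟩
  have hcoord : max 0 (min 1 (x i)) - f (clip x) i = x i := congrFun hx i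
  change f (clip x) i = 0
  rcases lt_or_ge (x i) 0 with hneg | hnonneg
  · rw [min_eq_right (by linarith), max_eq_left hneg.le] at hcoord
    linarith [h0 (clip x) i (by simp [clip, hneg.le])]
  rcases le_or_gt (x i) 1 with hle | hgt
  · rw [min_eq_right hle, max_eq_right hnonneg] at hcoord
    linarith
  · rw [min_eq_left hgt.le, max_eq_right zero_le_one] at hcoord
    linarith [h1 (clip x) i (by simp [clip, hgt.le])]

end FixedPoints

section EssentialFamilies

open MeasureTheory Topology

variable {X I : Type*} [TopologicalSpace X] {A B : I → Set X}

theorem isPartitionBetween_preimage_zero {A B : Set X} (f : C(X, ℝ)) (hA : ∀ x ∈ A, f x < 0)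
    (hB : ∀ x ∈ B, 0 < f x) : IsPartitionBetween (f ⁻¹' {0}) A B :=
  ⟨isClosed_singleton.preimage f.continuous, f ⁻¹' Iio 0, f ⁻¹' Ioi 0,
    isOpen_Iio.preimage f.continuous, isOpen_Ioi.preimage f.continuous,
    (Iio_disjoint_Ioi_same).preimage f, hA, hB, by
      rw [← preimage_compl, ← preimage_union, Iio_union_Ioi]⟩

theorem IsPartitionBetween.exists_continuousMap [PerfectlyNormalSpace X] {L A B : Set X}
    (h : IsPartitionBetween L A B) :
    ∃ f : C(X, ℝ), (∀ x ∈ A, f x < 0) ∧ (∀ x ∈ B, 0 < f x) ∧ f ⁻¹' {0} ⊆ L := by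
  obtain ⟨-, U, V, hU, hV, hUV, hAU, hBV, hL⟩ := h
  have hzero := perfectlyNormalSpace_iff_forall_isClosed_preimage_zero.mp ‹PerfectlyNormalSpace X›
  obtain ⟨u, hu, hu_mem⟩ := hzero Uᶜ hU.isClosed_compl
  obtain ⟨v, hv, hv_mem⟩ := hzero Vᶜ hV.isClosed_compl
  have hu_pos : ∀ x ∈ U, 0 < u x := fun x hx ↦ (hu_mem x).1.lt_of_ne' fun h0 ↦
    (hu.ge h0 : x ∈ Uᶜ) hx
  have hv_pos : ∀ x ∈ V, 0 < v x := fun x hx ↦ (hv_mem x).1.lt_of_ne' fun h0 ↦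
    (hv.ge h0 : x ∈ Vᶜ) hx
  have hneg : ∀ x ∈ U, (v - u) x < 0 := fun x hx ↦ by
    have hvx : v x = 0 := hv.le (hUV.notMem_of_mem_left hx)
    simpa [hvx] using hu_pos x hx
  have hpos : ∀ x ∈ V, 0 < (v - u) x := fun x hx ↦ by
    have hux : u x = 0 := hu.le (hUV.notMem_of_mem_right hx)
    simpa [hux] using hv_pos x hx
  refine ⟨v - u, fun x hx ↦ hneg x (hAU hx), fun x hx ↦ hpos x (hBV hx), fun x hx ↦ ?_⟩
  by_contra hxL
  rcases hL.le hxL with hxU | hxV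
  exacts [(hneg x hxU).ne hx, (hpos x hxV).ne' hx]

/-- A family of pairs of disjoint closed sets, essential or not. -/
structure IsClosedPairFamily (A B : I → Set X) : Prop where
  isClosed_left : ∀ i, IsClosed (A i)
  isClosed_right : ∀ i, IsClosed (B i)
  disjoint : ∀ i, Disjoint (A i) (B i)

theorem IsClosedPairFamily.comp (h : IsClosedPairFamily A B) {J : Type*} (σ : J → I) :
    IsClosedPairFamily (A ∘ σ) (B ∘ σ) :=
  ⟨fun j ↦ h.1 (σ j), fun j ↦ h.2 (σ j), fun j ↦ h.3 (σ j)⟩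

/-- The set of points where `h` does not vanish and its components have the signs prescribed by the
pairs `(A i, B i)`, namely negative on `A i` and positive on `B i`. A family of pairs is inessential
on `Y` precisely if `Y` is contained in such a set. -/
def inessentialSet (A B : I → Set X) (h : X → I → ℝ) : Set X :=
  {x | h x ≠ 0 ∧ ∀ i, (x ∈ A i → h x i < 0) ∧ (x ∈ B i → 0 < h x i)}

theorem isEssentialFamily_iff [PerfectlyNormalSpace X] :
    IsEssentialFamily A B ↔
      IsClosedPairFamily A B ∧ ∀ h : C(X, I → ℝ), inessentialSet A B h ≠ univ := by
  refine ⟨fun ⟨hA, hB, hAB, hL⟩ ↦ ⟨⟨hA, hB, hAB⟩, fun h huniv ↦ ?_⟩,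
    fun ⟨⟨hA, hB, hAB⟩, hmap⟩ ↦ ⟨hA, hB, hAB, fun L hL ↦ ?_⟩⟩
  · have hx (x) : x ∈ inessentialSet A B h := huniv ▸ mem_univ x
    let f (i : I) : C(X, ℝ) := ⟨fun x ↦ h x i, by fun_prop⟩
    obtain ⟨x, hxf⟩ := hL (fun i ↦ f i ⁻¹' {0}) fun i ↦ isPartitionBetween_preimage_zero (f i)
      (fun x ↦ ((hx x).2 i).1) fun x ↦ ((hx x).2 i).2
    exact (hx x).1 (funext fun i ↦ mem_iInter.mp hxf i)
  · choose f hf_neg hf_pos hfL using fun i ↦ (hL i).exists_continuousMap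
    obtain ⟨x, hx⟩ := (ne_univ_iff_exists_notMem _).mp (hmap (.pi f))
    have hfx : ContinuousMap.pi f x = 0 := by
      by_contra hne
      exact hx ⟨hne, fun i ↦ ⟨hf_neg i x, hf_pos i x⟩⟩
    exact ⟨x, mem_iInter.mpr fun i ↦ hfL i (congrFun hfx i)⟩

theorem IsClosedPairFamily.exists_urysohn [NormalSpace X] (hAB : IsClosedPairFamily A B) :
    ∃ e : C(X, I → ℝ), ∀ i, (∀ x ∈ A i, e x i = -1) ∧ ∀ x ∈ B i, e x i = 1 := by
  choose u hu0 hu1 _ using fun i ↦ exists_continuous_zero_one_of_isClosed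
    (hAB.isClosed_left i) (hAB.isClosed_right i) (hAB.disjoint i)
  refine ⟨⟨fun x i ↦ 2 * u i x - 1, by fun_prop⟩, fun i ↦ ⟨fun x hx ↦ ?_, fun x hx ↦ ?_⟩⟩
  · simp [hu0 i hx]
  · norm_num [hu1 i hx]

theorem IsClosedPairFamily.isOpen_inessentialSet [Finite I] (hAB : IsClosedPairFamily A B)
    (h : C(X, I → ℝ)) : IsOpen (inessentialSet A B h) := by
  have hset : inessentialSet A B h =
      h ⁻¹' {0}ᶜ ∩ ⋂ i, ((A i)ᶜ ∪ {x | h x i < 0}) ∩ ((B i)ᶜ ∪ {x | 0 < h x i}) := by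
    ext x
    simp [inessentialSet, imp_iff_not_or]
  rw [hset]
  refine (isOpen_compl_singleton.preimage h.continuous).inter (isOpen_iInter_of_finite fun i ↦ ?_)
  exact ((hAB.isClosed_left i).isOpen_compl.union (isOpen_lt (by fun_prop) (by fun_prop))).inter
    ((hAB.isClosed_right i).isOpen_compl.union (isOpen_lt (by fun_prop) (by fun_prop)))

/-- The traces of the pairs `(A i, B i)` on the subspace `Y` form an essential family. -/
def EssentialOn (A B : I → Set X) (Y : Set X) : Prop :=
  IsEssentialFamily (fun i ↦ ((↑) ⁻¹' A i : Set Y)) (fun i ↦ ((↑) ⁻¹' B i : Set Y))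

theorem IsClosedPairFamily.essentialOn_iff [PerfectlyNormalSpace X] (hAB : IsClosedPairFamily A B)
    {Y : Set X} (hY : IsClosed Y) :
    EssentialOn A B Y ↔ ∀ h : C(X, I → ℝ), ¬ Y ⊆ inessentialSet A B h := by
  have hABY : IsClosedPairFamily (fun i ↦ ((↑) ⁻¹' A i : Set Y)) (fun i ↦ (↑) ⁻¹' B i) :=
    ⟨fun i ↦ (hAB.isClosed_left i).preimage continuous_subtype_val,
      fun i ↦ (hAB.isClosed_right i).preimage continuous_subtype_val,
      fun i ↦ (hAB.disjoint i).preimage _⟩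
  rw [EssentialOn, isEssentialFamily_iff, and_iff_right hABY]
  refine ⟨fun hess h hsub ↦ hess (h.restrict Y) (eq_univ_of_forall fun x ↦ hsub x.2),
    fun hess h huniv ↦ ?_⟩
  obtain ⟨k, rfl⟩ := h.exists_restrict_eq hY
  exact hess k fun x hx ↦ huniv.ge (mem_univ (⟨x, hx⟩ : Y))

theorem EssentialOn.mono [PerfectlyNormalSpace X] (hAB : IsClosedPairFamily A B) {Y Z : Set X}
    (hY : IsClosed Y) (hZ : IsClosed Z) (hYZ : Y ⊆ Z) (h : EssentialOn A B Y) :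
    EssentialOn A B Z :=
  (hAB.essentialOn_iff hZ).mpr fun k hk ↦ (hAB.essentialOn_iff hY).mp h k (hYZ.trans hk)

theorem EssentialOn.iInter [PerfectlyNormalSpace X] [CompactSpace X] [Finite I]
    (hAB : IsClosedPairFamily A B) {κ : Type*} [Nonempty κ] {Y : κ → Set X}
    (hdir : Directed (· ⊇ ·) Y) (hY : ∀ k, IsClosed (Y k)) (hess : ∀ k, EssentialOn A B (Y k)) :
    EssentialOn A B (⋂ k, Y k) := by
  refine (hAB.essentialOn_iff (isClosed_iInter hY)).mpr fun h hsub ↦ ?_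
  obtain ⟨k, hk⟩ := exists_subset_nhds_of_isCompact' hdir (fun k ↦ (hY k).isCompact) hY
    fun x hx ↦ (hAB.isOpen_inessentialSet h).mem_nhds (hsub hx)
  exact (hAB.essentialOn_iff (hY k)).mp (hess k) h hk

theorem IsClosedPairFamily.isConnected_of_minimal [PerfectlyNormalSpace X]
    (hAB : IsClosedPairFamily A B) {M : Set X}
    (hM : Minimal (fun Y ↦ IsClosed Y ∧ EssentialOn A B Y) M) : IsConnected M := by
  obtain ⟨hclosed, hess⟩ := hM.prop
  rw [hAB.essentialOn_iff hclosed] at hess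
  have hproper {t : Set X} (ht : IsClosed t) (hMt : ¬ M ⊆ t) :
      ∃ h : C(X, I → ℝ), M ∩ t ⊆ inessentialSet A B h := by
    by_contra! hnot
    have hMt_ess := (hAB.essentialOn_iff (hclosed.inter ht)).mpr hnot
    exact hMt ((hM.le_of_le ⟨hclosed.inter ht, hMt_ess⟩ inter_subset_left).trans inter_subset_right)
  refine ⟨nonempty_iff_ne_empty.mpr fun h0 ↦ hess 0 (h0 ▸ empty_subset _),
    isPreconnected_closed_iff.mpr fun s t hs ht hst ⟨x, hxM, hxs⟩ ⟨y, hyM, hyt⟩ ↦ ?_⟩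
  by_contra hempty
  have hdisj : Disjoint (M ∩ s) (M ∩ t) := disjoint_left.mpr fun z hz hz' ↦
    hempty ⟨z, hz.1, hz.2, hz'.2⟩
  obtain ⟨h, hh⟩ := hproper hs fun hMs ↦ hempty ⟨y, hyM, hMs hyM, hyt⟩
  obtain ⟨k, hk⟩ := hproper ht fun hMt ↦ hempty ⟨x, hxM, hxs, hMt hxM⟩
  obtain ⟨u, hu0, hu1, -⟩ := exists_continuous_zero_one_of_isClosed
    (hclosed.inter hs) (hclosed.inter ht) hdisj
  refine hess ((1 - u) • h + u • k) fun z hzM ↦ ?_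
  rcases hst hzM with hzs | hzt
  · simpa [inessentialSet, hu0 ⟨hzM, hzs⟩] using hh ⟨hzM, hzs⟩
  · simpa [inessentialSet, hu1 ⟨hzM, hzt⟩] using hk ⟨hzM, hzt⟩

theorem EssentialOn.exists_isConnected_subset [PerfectlyNormalSpace X] [CompactSpace X] [Finite I]
    (hAB : IsClosedPairFamily A B) {Y : Set X} (hY : IsClosed Y) (h : EssentialOn A B Y) :
    ∃ M ⊆ Y, IsClosed M ∧ IsConnected M ∧ EssentialOn A B M := by
  have hlower : ∀ 𝒞 ⊆ {Z | IsClosed Z ∧ EssentialOn A B Z}, IsChain (· ⊆ ·) 𝒞 → 𝒞.Nonempty →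
      ⋂₀ 𝒞 ∈ {Z | IsClosed Z ∧ EssentialOn A B Z} := fun 𝒞 h𝒞 hchain hne ↦ by
    have := hne.to_subtype
    rw [sInter_eq_iInter]
    have hdir : Directed (· ⊇ ·) fun Z : 𝒞 ↦ (Z : Set X) := fun Z W ↦
      (hchain.total Z.2 W.2).elim (fun h ↦ ⟨Z, subset_rfl, h⟩) fun h ↦ ⟨W, h, subset_rfl⟩
    exact ⟨isClosed_iInter fun Z ↦ (h𝒞 Z.2).1,
      .iInter hAB hdir (fun Z ↦ (h𝒞 Z.2).1) fun Z ↦ (h𝒞 Z.2).2⟩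
  obtain ⟨M, hMY, hM⟩ := zorn_superset_nonempty _ (fun 𝒞 h𝒞 hchain hne ↦
    ⟨_, hlower 𝒞 h𝒞 hchain hne, fun _ ↦ sInter_subset_of_mem⟩) Y ⟨hY, h⟩
  exact ⟨M, hMY, hM.prop.1, hAB.isConnected_of_minimal hM, hM.prop.2⟩

-- A map without zeros on `{f = 0}` is corrected away from this set to one with the prescribed
-- signs; together with `f` it would show that the whole family is inessential.
theorem IsEssentialFamily.essentialOn_preimage_zero [PerfectlyNormalSpace X] {n : ℕ}
    {A B : Fin (n + 1) → Set X} (hess : IsEssentialFamily A B) (f : C(X, ℝ))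
    (hA : ∀ x ∈ A 0, f x < 0) (hB : ∀ x ∈ B 0, 0 < f x) :
    EssentialOn (A ∘ Fin.succ) (B ∘ Fin.succ) (f ⁻¹' {0}) := by
  obtain ⟨hAB, hmap⟩ := isEssentialFamily_iff.mp hess
  have hAB' := hAB.comp Fin.succ
  have hclosed : IsClosed (f ⁻¹' {0}) := isClosed_singleton.preimage f.continuous
  refine (hAB'.essentialOn_iff hclosed).mpr fun h hsub ↦ ?_
  obtain ⟨w, hw0, hw1, hw_mem⟩ := exists_continuous_zero_one_of_isClosed
    (hAB'.isOpen_inessentialSet h).isClosed_compl hclosed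
    (disjoint_compl_left_iff_subset.mpr hsub)
  obtain ⟨e, he⟩ := hAB'.exists_urysohn
  have hmix (x) (i : Fin n) : (x ∈ A i.succ → w x * h x i + (1 - w x) * e x i < 0) ∧
      (x ∈ B i.succ → 0 < w x * h x i + (1 - w x) * e x i) := by
    obtain ⟨hw_nonneg, hw_le⟩ := hw_mem x
    rcases hw_nonneg.eq_or_lt with hw_zero | hw_pos
    · rw [← hw_zero]
      exact ⟨fun hxA ↦ by simp [(he i).1 x hxA], fun hxB ↦ by simp [(he i).2 x hxB]⟩
    have hx : x ∈ inessentialSet (A ∘ Fin.succ) (B ∘ Fin.succ) h :=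
      not_not.mp fun hx ↦ hw_pos.ne' (hw0 hx)
    refine ⟨fun hxA ↦ ?_, fun hxB ↦ ?_⟩
    · rw [(he i).1 x hxA]
      linarith [mul_neg_of_pos_of_neg hw_pos ((hx.2 i).1 hxA)]
    · rw [(he i).2 x hxB]
      linarith [mul_pos hw_pos ((hx.2 i).2 hxB)]
  let F : C(X, Fin (n + 1) → ℝ) :=
    ⟨fun x ↦ Fin.cons (f x) fun i ↦ w x * h x i + (1 - w x) * e x i, by fun_prop⟩
  refine hmap F (eq_univ_of_forall fun x ↦ ⟨fun hFx ↦ ?_, Fin.cases ⟨hA x, hB x⟩ (hmix x)⟩)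
  have hfx : x ∈ f ⁻¹' {0} := congrFun hFx 0
  refine (hsub hfx).1 (funext fun i ↦ ?_)
  have hFi : w x * h x i + (1 - w x) * e x i = 0 := congrFun hFx i.succ
  simpa [hw1 hfx] using hFi

theorem isEssentialFamily_faces {ι : Type*} [Finite ι] :
    IsEssentialFamily (fun i ↦ {x : Icc (0 : ι → ℝ) 1 | x.1 i = 0}) fun i ↦ {x | x.1 i = 1} := by
  have hcoord (i) : Continuous fun x : Icc (0 : ι → ℝ) 1 ↦ x.1 i :=
    (continuous_apply i).comp continuous_subtype_val
  refine isEssentialFamily_iff.mpr ⟨⟨fun i ↦ isClosed_eq (hcoord i) continuous_const,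
    fun i ↦ isClosed_eq (hcoord i) continuous_const,
    fun i ↦ disjoint_left.mpr fun x h0 h1 ↦ zero_ne_one (h0.symm.trans h1)⟩, fun h huniv ↦ ?_⟩
  have hx (x) : x ∈ inessentialSet _ _ h := huniv.ge (mem_univ x)
  obtain ⟨x, hx0⟩ := exists_eq_zero_of_faces h (fun x i hxi ↦ (((hx x).2 i).1 hxi).le)
    fun x i hxi ↦ (((hx x).2 i).2 hxi).le
  exact (hx x).1 hx0

-- A continuously differentiable approximation of a Urysohn map sends the null set `range e` to a
-- null set, so it misses values arbitrarily close to zero.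
theorem not_isEssentialFamily_of_isClosedEmbedding {ι : Type*} [Fintype ι] {e : X → ι → ℝ}
    (he : IsClosedEmbedding e) (hnull : volume (range e) = 0) (A B : ι → Set X) :
    ¬ IsEssentialFamily A B := by
  intro hess
  have := he.isEmbedding.metrizableSpace
  obtain ⟨hAB, hmap⟩ := isEssentialFamily_iff.mp hess
  obtain ⟨u, hu⟩ := hAB.exists_urysohn
  obtain ⟨v, rfl⟩ := ContinuousMap.exists_extension he u
  obtain ⟨g, hg, hdist, -⟩ := v.continuous.exists_contDiff_approx 1 (ε := fun _ ↦ 1 / 2)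
    continuous_const fun _ ↦ one_half_pos
  have himage : volume (g '' range e) = 0 :=
    addHaar_image_eq_zero_of_differentiableOn_of_addHaar_eq_zero volume
      (hg.differentiable one_ne_zero).differentiableOn hnull
  obtain ⟨p, hp_ball, hp_image⟩ : (Metric.ball (0 : ι → ℝ) (1 / 2) \ g '' range e).Nonempty := by
    refine nonempty_of_measure_ne_zero (μ := volume) ?_
    rw [measure_sdiff_null himage]
    exact (Metric.measure_ball_pos volume 0 one_half_pos).ne'
  have hclose (x) (i) : |g (e x) i - p i - v (e x) i| < 1 := by
    have hg_close := (dist_le_pi_dist (g (e x)) (v (e x)) i).trans_lt (hdist (e x))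
    have hp_small := (norm_le_pi_norm p i).trans_lt (mem_ball_zero_iff.mp hp_ball)
    rw [Real.dist_eq] at hg_close
    rw [Real.norm_eq_abs] at hp_small
    rw [sub_right_comm]
    linarith [abs_sub (g (e x) i - v (e x) i) (p i)]
  refine hmap ⟨fun x ↦ g (e x) - p, by have := hg.continuous; have := he.continuous; fun_prop⟩ <|
    eq_univ_of_forall fun x ↦ ⟨fun hx ↦ hp_image ⟨e x, ⟨x, rfl⟩, sub_eq_zero.mp hx⟩,
      fun i ↦ ⟨fun hxA ↦ ?_, fun hxB ↦ ?_⟩⟩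
  · have hv : v (e x) i = -1 := (hu i).1 x hxA
    change g (e x) i - p i < 0
    linarith [(abs_lt.mp (hclose x i)).2]
  · have hv : v (e x) i = 1 := (hu i).2 x hxB
    change 0 < g (e x) i - p i
    linarith [(abs_lt.mp (hclose x i)).1]

end EssentialFamilies

section Crookedness

open MeasureTheory Filter Topology

theorem HereditarilyIndecomposable.of_injective {X Y : Type*} [TopologicalSpace X]
    [TopologicalSpace Y] {f : X → Y} (hY : HereditarilyIndecomposable Y) (hf : Continuous f)
    (hinj : f.Injective) : HereditarilyIndecomposable X :=
  fun C D hC hC' hD hD' hCD ↦ by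
    simpa only [image_subset_image_iff hinj] using hY (f '' C) (f '' D) (hC.image hf)
      (hC'.image f hf.continuousOn) (hD.image hf) (hD'.image f hf.continuousOn)
      ((hCD.image f).mono (image_inter_subset f C D))

variable {X : Type*}

/-- On `M` the function `f` folds the space between `{φ ≤ 0}` and `{1 ≤ φ}`: the pieces
`{f ≤ -1/4}`, `{|f| ≤ 1/4}` and `{1/4 ≤ f}` are such that the first contains `{φ ≤ 0}`, the last
contains `{1 ≤ φ}`, the first two meet only in `{2/3 < φ}` and the last two only in `{φ < 1/3}`.
Hereditary indecomposability amounts to the existence of such foldings (Krasinkiewicz). -/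
structure IsCrookedOn (f φ : X → ℝ) (M : Set X) : Prop where
  lt_of_le_zero : ∀ x ∈ M, φ x ≤ 0 → f x < -1 / 4
  lt_of_eq_neg : ∀ x ∈ M, f x = -1 / 4 → 2 / 3 < φ x
  lt_of_eq_pos : ∀ x ∈ M, f x = 1 / 4 → φ x < 1 / 3
  lt_of_one_le : ∀ x ∈ M, 1 ≤ φ x → 1 / 4 < f x

namespace IsCrookedOn

variable {f φ : X → ℝ} {M N : Set X}

theorem mono (h : IsCrookedOn f φ M) (hNM : N ⊆ M) : IsCrookedOn f φ N :=
  ⟨fun x hx ↦ h.1 x (hNM hx), fun x hx ↦ h.2 x (hNM hx), fun x hx ↦ h.3 x (hNM hx),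
    fun x hx ↦ h.4 x (hNM hx)⟩

theorem neg (h : IsCrookedOn f φ M) : IsCrookedOn (-f) (1 - φ) M where
  lt_of_le_zero x hx hφ := by
    have := h.lt_of_one_le x hx (sub_nonpos.mp hφ)
    simp only [Pi.neg_apply]; linarith
  lt_of_eq_neg x hx hf := by
    simp only [Pi.neg_apply] at hf
    have := h.lt_of_eq_pos x hx (by linarith)
    simp only [Pi.sub_apply, Pi.one_apply]; linarith
  lt_of_eq_pos x hx hf := by
    simp only [Pi.neg_apply] at hf
    have := h.lt_of_eq_neg x hx (by linarith)
    simp only [Pi.sub_apply, Pi.one_apply]; linarith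
  lt_of_one_le x hx hφ := by
    simp only [Pi.sub_apply, Pi.one_apply] at hφ
    have := h.lt_of_le_zero x hx (by linarith)
    simp only [Pi.neg_apply]; linarith

variable [TopologicalSpace X]

theorem lt_of_isPreconnected (h : IsCrookedOn f φ M) (hf : Continuous f) {C : Set X} (hCM : C ⊆ M)
    (hC : IsPreconnected C) (hφ : ∀ x ∈ C, φ x < 2 / 3) {c : X} (hc : c ∈ C) (hφc : φ c ≤ 0) :
    ∀ x ∈ C, f x < -1 / 4 := by
  intro x hx
  by_contra! hge
  obtain ⟨z, hz, hfz⟩ := hC.intermediate_value hc hx hf.continuousOn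
    ⟨(h.lt_of_le_zero c (hCM hc) hφc).le, hge⟩
  exact (hφ z hz).not_gt (h.lt_of_eq_neg z (hCM hz) hfz)

theorem gt_of_isPreconnected (h : IsCrookedOn f φ M) (hf : Continuous f) {D : Set X} (hDM : D ⊆ M)
    (hD : IsPreconnected D) (hφ : ∀ x ∈ D, 1 / 3 < φ x) {d : X} (hd : d ∈ D) (hφd : 1 ≤ φ d) :
    ∀ x ∈ D, 1 / 4 < f x := by
  intro x hx
  have hneg := h.neg.lt_of_isPreconnected hf.neg hDM hD
    (fun y hy ↦ by simp only [Pi.sub_apply, Pi.one_apply]; linarith [hφ y hy]) hd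
    (sub_nonpos.mpr hφd) x hx
  simp only [Pi.neg_apply] at hneg
  linarith

end IsCrookedOn

/-- The graph `s ↦ y` of the zero set of `zFold` is Z-shaped: it joins `y ≤ 0` at `s = -1/2` to
`y ≥ 1` at `s = 1/2` through the segments `{y = 3/4}`, `{s = 0}` and `{y = 1/4}`. -/
noncomputable def zFold (s y : ℝ) : ℝ :=
  min (s + 1 / 2) (max (s - 1 / 2) (min (3 / 4 - y) (max (-s) (1 / 4 - y))))

theorem continuous_zFold : Continuous fun p : ℝ × ℝ ↦ zFold p.1 p.2 := by
  unfold zFold; fun_prop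

theorem zFold_le {s : ℝ} (hs : s ≤ -1) (y : ℝ) : zFold s y ≤ -1 / 2 :=
  (min_le_left _ _).trans (by linarith)

theorem le_zFold {s : ℝ} (hs : 1 ≤ s) (y : ℝ) : 1 / 2 ≤ zFold s y :=
  le_min (by linarith) (le_max_of_le_left (by linarith))

theorem isCrookedOn_zFold (f φ : X → ℝ) :
    IsCrookedOn f φ {x | zFold (f x) (φ x) ∈ Ioo (-1 / 16) (1 / 16)} := by
  constructor <;> intro x hx <;> simp only [mem_ofPred_eq, zFold, mem_Ioo] at hx <;> grind

theorem exists_mem_separating_of_dense [TopologicalSpace X] [T4Space X] {S : Set C(X, ℝ)}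
    (hS : Dense S) {C D : Set X} (hC : IsCompact C) (hD : IsCompact D) {c d : X} (hc : c ∈ C \ D)
    (hd : d ∈ D \ C) :
    ∃ φ ∈ S, φ c < 0 ∧ 1 < φ d ∧ (∀ x ∈ C, φ x < 2 / 3) ∧ ∀ x ∈ D, 1 / 3 < φ x := by
  obtain ⟨u, huD, huc, hu⟩ := exists_continuous_zero_one_of_isClosed hD.isClosed
    isClosed_singleton (disjoint_singleton_right.mpr hc.2)
  obtain ⟨v, hvC, hvd, hv⟩ := exists_continuous_zero_one_of_isClosed hC.isClosed
    isClosed_singleton (disjoint_singleton_right.mpr hd.2)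
  let ψ : C(X, ℝ) := ⟨fun x ↦ 1 / 2 - u x + v x, by fun_prop⟩
  have hψc : ψ c < 0 := by
    have huc' : u c = 1 := huc rfl
    have hvc : v c = 0 := hvC hc.1
    norm_num [ψ, huc', hvc]
  have hψd : 1 < ψ d := by
    have hud : u d = 0 := huD hd.1
    have hvd' : v d = 1 := hvd rfl
    norm_num [ψ, hud, hvd']
  have hψC : MapsTo ψ C (Iio (2 / 3)) := fun x hx ↦ by
    have hvx : v x = 0 := hvC hx
    change 1 / 2 - u x + v x < 2 / 3
    linarith [(hu x).1]
  have hψD : MapsTo ψ D (Ioi (1 / 3)) := fun x hx ↦ by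
    have hux : u x = 0 := huD hx
    change 1 / 3 < 1 / 2 - u x + v x
    linarith [(hv x).1]
  have hopen : IsOpen (({φ : C(X, ℝ) | φ c < 0} ∩ {φ : C(X, ℝ) | 1 < φ d}) ∩
      ({φ : C(X, ℝ) | MapsTo φ C (Iio (2 / 3))} ∩ {φ : C(X, ℝ) | MapsTo φ D (Ioi (1 / 3))})) :=
    ((isOpen_lt (continuous_eval_const c) continuous_const).inter
      (isOpen_lt continuous_const (continuous_eval_const d))).inter
    ((ContinuousMap.isOpen_setOfPred_mapsTo hC isOpen_Iio).inter
      (ContinuousMap.isOpen_setOfPred_mapsTo hD isOpen_Ioi))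
  obtain ⟨φ, hφS, ⟨hφc, hφd⟩, hφC, hφD⟩ := hS.exists_mem_open hopen ⟨ψ, ⟨hψc, hψd⟩, hψC, hψD⟩
  exact ⟨φ, hφS, hφc, hφd, hφC, hφD⟩

theorem hereditarilyIndecomposable_of_dense [TopologicalSpace X] [T4Space X] {M : Set X}
    (hM : Dense {φ : C(X, ℝ) | ∃ f : C(X, ℝ), IsCrookedOn f φ M}) :
    HereditarilyIndecomposable M := by
  intro C D hC hC' hD hD' ⟨p, hpC, hpD⟩
  by_contra! hCD
  obtain ⟨⟨c, hcC, hcD⟩, ⟨d, hdD, hdC⟩⟩ := And.intro (not_subset.mp hCD.1) (not_subset.mp hCD.2)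
  have hval := continuous_subtype_val (p := (· ∈ M))
  have hmem (a : M) (E : Set M) : (a : X) ∈ Subtype.val '' E ↔ a ∈ E :=
    Subtype.val_injective.mem_set_image
  obtain ⟨φ, ⟨f, hf⟩, hφc, hφd, hφC, hφD⟩ := exists_mem_separating_of_dense hM (hC.image hval)
    (hD.image hval) (c := c) (d := d) ⟨(hmem c C).mpr hcC, (hmem c D).not.mpr hcD⟩
    ⟨(hmem d D).mpr hdD, (hmem d C).not.mpr hdC⟩
  have hfC := hf.lt_of_isPreconnected f.continuous (Subtype.coe_image_subset M C)
    (hC'.isPreconnected.image _ hval.continuousOn) hφC ((hmem c C).mpr hcC) hφc.le p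
    ((hmem p C).mpr hpC)
  have hfD := hf.gt_of_isPreconnected f.continuous (Subtype.coe_image_subset M D)
    (hD'.isPreconnected.image _ hval.continuousOn) hφD ((hmem d D).mpr hdD) hφd.le p
    ((hmem p D).mpr hpD)
  linarith

theorem exists_measure_preimage_closedBall_lt [MeasurableSpace X] (μ : Measure X)
    [IsFiniteMeasure μ] {G : X → ℝ} (hG : Measurable G) {U : Set ℝ} (hU : IsOpen U)
    (hU' : U.Nonempty) {δ : ENNReal} (hδ : δ ≠ 0) :
    ∃ c η, 0 < η ∧ Metric.closedBall c η ⊆ U ∧ μ (G ⁻¹' Metric.closedBall c η) < δ := by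
  obtain ⟨c, hc_null, hcU⟩ :=
    ((Measure.countable_meas_level_set_pos (μ := μ) hG).dense_compl ℝ).exists_mem_open hU hU'
  have hlim := tendsto_measure_cthickening_of_isClosed (μ := μ.map G)
    ⟨1, one_pos, measure_ne_top _ _⟩ (isClosed_singleton (x := c))
  have hc : μ.map G {c} < δ := by
    rw [Measure.map_apply hG (measurableSet_singleton c)]
    rw [mem_compl_iff, mem_ofPred_eq, not_lt] at hc_null
    exact hc_null.trans_lt hδ.bot_lt
  have hsmall := (hlim.eventually_lt_const hc).and
    (eventually_closedBall_subset (hU.mem_nhds hcU))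
  obtain ⟨η, ⟨hηδ, hηU⟩, hη⟩ :=
    ((hsmall.filter_mono (nhdsWithin_le_nhds (s := Ioi 0))).and self_mem_nhdsWithin).exists
  refine ⟨c, η, hη, hηU, ?_⟩
  rwa [Metric.cthickening_singleton c hη.le,
    Measure.map_apply hG Metric.isClosed_closedBall.measurableSet] at hηδ

/-- The inductive step in the construction of a hereditarily indecomposable compactum as a
decreasing intersection of slabs `{|f| ≤ 1}`: the slab of `g` separates `{f ≤ -1}` from `{1 ≤ f}`
and on it `f` is crooked with respect to `φ`. -/
structure IsCrookedRefinement (f φ g : X → ℝ) : Prop where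
  lt_neg_one : ∀ x, f x ≤ -1 → g x < -1
  one_lt : ∀ x, 1 ≤ f x → 1 < g x
  isCrookedOn : IsCrookedOn f φ {x | |g x| ≤ 1}

theorem IsCrookedRefinement.abs_le_one {f φ g : X → ℝ} (h : IsCrookedRefinement f φ g) {x : X}
    (hx : |g x| ≤ 1) : |f x| ≤ 1 := by
  contrapose! hx
  rcases lt_abs.mp hx with hpos | hneg
  · exact lt_abs.mpr (.inl (h.one_lt x hpos.le))
  · exact lt_abs.mpr (.inr (lt_neg.mpr (h.lt_neg_one x (by linarith))))

theorem exists_isCrookedRefinement [TopologicalSpace X] [MeasurableSpace X] [OpensMeasurableSpace X]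
    (μ : Measure X) [IsFiniteMeasure μ] (f φ : C(X, ℝ)) {δ : ENNReal} (hδ : δ ≠ 0) :
    ∃ g : C(X, ℝ), IsCrookedRefinement f φ g ∧ μ {x | |g x| ≤ 1} < δ := by
  have hG : Continuous fun x ↦ zFold (f x) (φ x) := continuous_zFold.comp₂ f.continuous φ.continuous
  obtain ⟨c, η, hη, hball, hμ⟩ := exists_measure_preimage_closedBall_lt μ hG.measurable
    (isOpen_Ioo (a := -1 / 16) (b := 1 / 16)) ⟨0, by norm_num⟩ hδ
  have hslab (x) :
      |(zFold (f x) (φ x) - c) / η| ≤ 1 ↔ zFold (f x) (φ x) ∈ Metric.closedBall c η := by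
    rw [abs_div, abs_of_pos hη, div_le_one hη, Metric.mem_closedBall, Real.dist_eq]
  rw [Real.closedBall_eq_Icc] at hball
  have hc_lower : -1 / 16 < c - η := (hball (left_mem_Icc.mpr (by linarith))).1
  have hc_upper : c + η < 1 / 16 := (hball (right_mem_Icc.mpr (by linarith))).2
  refine ⟨⟨fun x ↦ (zFold (f x) (φ x) - c) / η, by fun_prop⟩,
    ⟨fun x hx ↦ ?_, fun x hx ↦ ?_, (isCrookedOn_zFold f φ).mono fun x hx ↦ ?_⟩, ?_⟩
  · rw [ContinuousMap.coe_mk, div_lt_iff₀ hη]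
    linarith [zFold_le hx (φ x)]
  · rw [ContinuousMap.coe_mk, lt_div_iff₀ hη]
    linarith [le_zFold hx (φ x)]
  · exact hball (Real.closedBall_eq_Icc ▸ (hslab x).mp hx)
  · simpa only [ContinuousMap.coe_mk, hslab] using! hμ

theorem exists_seq_isCrookedRefinement [TopologicalSpace X] [MeasurableSpace X]
    [OpensMeasurableSpace X] (μ : Measure X) [IsFiniteMeasure μ] (f₀ : C(X, ℝ)) (φ : ℕ → C(X, ℝ)) :
    ∃ f : ℕ → C(X, ℝ), f 0 = f₀ ∧ (∀ k, IsCrookedRefinement (f k) (φ k) (f (k + 1))) ∧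
      μ (⋂ k, {x | |f k x| ≤ 1}) = 0 := by
  choose g hg hμg using fun (k : ℕ) (f : C(X, ℝ)) ↦ exists_isCrookedRefinement μ f (φ k)
    (ENNReal.inv_ne_zero.mpr (ENNReal.natCast_ne_top k))
  let f (k : ℕ) : C(X, ℝ) := Nat.rec f₀ g k
  refine ⟨f, rfl, fun k ↦ hg k (f k), le_antisymm ?_ zero_le⟩
  refine ge_of_tendsto' ENNReal.tendsto_inv_nat_nhds_zero fun k ↦ ?_
  exact (measure_mono (iInter_subset _ (k + 1))).trans (hμg k (f k)).le

variable [TopologicalSpace X] [TopologicalSpace.MetrizableSpace X] [CompactSpace X]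
  [MeasurableSpace X] [OpensMeasurableSpace X] {n : ℕ} {A B : Fin (n + 1) → Set X}

theorem IsEssentialFamily.exists_null_hereditarilyIndecomposable (hess : IsEssentialFamily A B)
    (μ : Measure X) [IsFiniteMeasure μ] :
    ∃ M : Set X, IsClosed M ∧ μ M = 0 ∧ HereditarilyIndecomposable M ∧
      EssentialOn (A ∘ Fin.succ) (B ∘ Fin.succ) M := by
  obtain ⟨hAB, -⟩ := isEssentialFamily_iff.mp hess
  have hAB' := hAB.comp Fin.succ
  obtain ⟨e, he⟩ := hAB.exists_urysohn
  let φ := TopologicalSpace.denseSeq C(X, ℝ)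
  obtain ⟨f, hf0, hf, hnull⟩ :=
    exists_seq_isCrookedRefinement μ ⟨fun x ↦ e x 0, by fun_prop⟩ φ
  let S (k : ℕ) : Set X := {x | |f k x| ≤ 1}
  have hS (k) : IsClosed (S k) := isClosed_le (by fun_prop) continuous_const
  have hSanti : Antitone S := antitone_nat_of_succ_le fun k x hx ↦ (hf k).abs_le_one hx
  have hfA (k) : ∀ x ∈ A 0, f k x ≤ -1 := fun x hx ↦ by
    induction k with
    | zero => exact hf0 ▸ ((he 0).1 x hx).le
    | succ k ih => exact ((hf k).lt_neg_one x ih).le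
  have hfB (k) : ∀ x ∈ B 0, 1 ≤ f k x := fun x hx ↦ by
    induction k with
    | zero => exact hf0 ▸ ((he 0).2 x hx).ge
    | succ k ih => exact ((hf k).one_lt x ih).le
  have hSess (k) : EssentialOn (A ∘ Fin.succ) (B ∘ Fin.succ) (S k) := by
    have hzero := hess.essentialOn_preimage_zero (f k)
      (fun x hx ↦ (hfA k x hx).trans_lt neg_one_lt_zero)
      fun x hx ↦ one_pos.trans_le (hfB k x hx)
    refine hzero.mono hAB' (isClosed_singleton.preimage (f k).continuous) (hS k) fun x hx ↦ ?_
    have hfx : f k x = 0 := hx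
    simp [S, hfx]
  refine ⟨⋂ k, S k, isClosed_iInter hS, hnull, hereditarilyIndecomposable_of_dense ?_,
    .iInter hAB' hSanti.directed_ge hS hSess⟩
  refine (TopologicalSpace.denseRange_denseSeq C(X, ℝ)).mono (range_subset_iff.mpr fun k ↦ ?_)
  exact ⟨f k, (hf k).isCrookedOn.mono (iInter_subset S (k + 1))⟩

theorem IsEssentialFamily.exists_null_continuum (hess : IsEssentialFamily A B) (μ : Measure X)
    [IsFiniteMeasure μ] :
    ∃ Y : Set X, IsClosed Y ∧ IsConnected Y ∧ μ Y = 0 ∧ HereditarilyIndecomposable Y ∧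
      EssentialOn (A ∘ Fin.succ) (B ∘ Fin.succ) Y := by
  obtain ⟨M, hM, hnull, hHI, hM_ess⟩ := hess.exists_null_hereditarilyIndecomposable μ
  obtain ⟨hAB, -⟩ := isEssentialFamily_iff.mp hess
  obtain ⟨Y, hYM, hY, hY_conn, hY_ess⟩ := hM_ess.exists_isConnected_subset (hAB.comp Fin.succ) hM
  exact ⟨Y, hY, hY_conn, measure_mono_null hYM hnull,
    hHI.of_injective (continuous_inclusion hYM) (inclusion_injective hYM), hY_ess⟩

end Crookedness

/-- Bing: for every `n` there is an `n`-dimensional hereditarily indecomposable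
metrizable continuum. -/
theorem exists_hereditarilyIndecomposable_continuum_dim (n : ℕ) :
    ∃ (X : Type) (_ : TopologicalSpace X), TopologicalSpace.MetrizableSpace X ∧
      CompactSpace X ∧ ConnectedSpace X ∧ Nonempty X ∧
      HereditarilyIndecomposable X ∧
      (∃ A B : Fin n → Set X, IsEssentialFamily A B) ∧
      ¬ ∃ A B : Fin (n + 1) → Set X, IsEssentialFamily A B := by
  let μ := MeasureTheory.volume.comap ((↑) : Icc (0 : Fin (n + 1) → ℝ) 1 → Fin (n + 1) → ℝ)
  have hval : Topology.IsClosedEmbedding ((↑) : Icc (0 : Fin (n + 1) → ℝ) 1 → Fin (n + 1) → ℝ) :=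
    isClosed_Icc.isClosedEmbedding_subtypeVal
  have : MeasureTheory.IsFiniteMeasureOnCompacts μ :=
    .comap' _ hval.continuous hval.measurableEmbedding
  obtain ⟨Y, hY, hY_conn, hnull, hHI, hess⟩ := isEssentialFamily_faces.exists_null_continuum μ
  have hrange : MeasureTheory.volume (range fun y : Y ↦ y.1.1) = 0 := by
    rwa [range_comp' Subtype.val Subtype.val, Subtype.range_coe,
      ← hval.measurableEmbedding.comap_apply]
  exact ⟨Y, inferInstance, inferInstance, isCompact_iff_compactSpace.mp hY.isCompact,
    isConnected_iff_connectedSpace.mp hY_conn, hY_conn.nonempty.to_subtype, hHI, ⟨_, _, hess⟩,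
    fun ⟨A, B, h⟩ ↦ not_isEssentialFamily_of_isClosedEmbedding
      (hval.comp hY.isClosedEmbedding_subtypeVal) hrange A B h⟩
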